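/- Under Assumption B, the correlation (L²) dimension of ν satisfies dim_C(ν) ≥ min(2, 1 + log(Nc)/(−log b)); equivalently, τ(2) = liminf_{r→0⁺} (log Σ_i ν(B_i^{(r)})²)/(log r) ≥ min(2, 1 + log(Nc)/(−log b)), where for each r > 0 the B_i^{(r)} are the r-mesh squares intersecting the support of ν. -/

import Mathlib

open MeasureTheory Filter Set Topology
open scoped ENNReal

noncomputable section

/-- One triangular affine map `S_i(x,y) = (c x + u_i, d_i x + b y + v_i)`. -/
def Smap {N : ℕ} (c b : ℝ) (u v d : Fin N → ℝ) (i : Fin N) (p : ℝ × ℝ) : ℝ × ℝ :=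
  (c * p.1 + u i, d i * p.1 + b * p.2 + v i)

/-- Composition along a finite word: `Sword [i₁,…,iₙ] = S_{i₁} ∘ ⋯ ∘ S_{iₙ}`. -/
def Sword {N : ℕ} (c b : ℝ) (u v d : Fin N → ℝ) : List (Fin N) → (ℝ × ℝ) → ℝ × ℝ
  | [] => id
  | i :: w => Smap c b u v d i ∘ Sword c b u v d w

/-- The closed unit square `[0,1]²`. -/
def unitSq : Set (ℝ × ℝ) := Set.Icc 0 1 ×ˢ Set.Icc 0 1

/-- The length-`n` prefix of an infinite word, as a list. -/
def prefixWord {N : ℕ} (i : ℕ → Fin N) (n : ℕ) : List (Fin N) :=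
  List.ofFn (fun k : Fin n => i k)

/-- The transversality condition: there is `c₃ > 0` such that for every `n` and all
`𝐢, 𝐣` with different first symbols, the projection to the `x`-axis of the intersection
of the two level-`n` cylinder parallelograms has diameter `< c₃ bⁿ`. -/
def Transversality (N : ℕ) (c b : ℝ) (u v d : Fin N → ℝ) : Prop :=
  ∃ c₃ > (0 : ℝ), ∀ (n : ℕ) (i j : ℕ → Fin N), i 0 ≠ j 0 →
    Metric.diam (Prod.fst '' (Sword c b u v d (prefixWord i n) '' unitSq ∩
      Sword c b u v d (prefixWord j n) '' unitSq)) < c₃ * b ^ n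

/-- `μ` is the uniform Bernoulli measure `(1/N,…,1/N)^ℕ` on the symbolic space. -/
def IsUniformBernoulli (N : ℕ) (μ : Measure (ℕ → Fin N)) : Prop :=
  IsProbabilityMeasure μ ∧ ∀ (n : ℕ) (w : Fin n → Fin N),
    μ {x | ∀ k : Fin n, x (k : ℕ) = w k} = (1 / (N : ℝ≥0∞)) ^ n

/-- `m` is absolutely continuous w.r.t. Lebesgue measure with an `L^q` density. -/
def HasLqDensity (m : Measure ℝ) (q : ℝ) : Prop :=
  ∃ φ : ℝ → ℝ≥0∞, m = MeasureTheory.volume.withDensity φ ∧ (∫⁻ t, φ t ^ q) < ⊤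

/-- The Hausdorff dimension of a measure: the infimum of Hausdorff dimensions
of sets of full measure. -/
def measureDimH {X : Type*} [EMetricSpace X] [MeasurableSpace X] (m : Measure X) : ℝ≥0∞ :=
  ⨅ (A : Set X) (_ : m Aᶜ = 0), dimH A

/-- The sum `Σ_i 𝔪(B_i^{(r)})²` over the `r`-mesh squares (squares of the grid of mesh
size `r`; squares disjoint from the support contribute `0`). -/
def meshSum (m : Measure (ℝ × ℝ)) (r : ℝ) : ℝ≥0∞ :=
  ∑' p : ℤ × ℤ,
    (m (Set.Ico ((p.1 : ℝ) * r) ((p.1 + 1 : ℝ) * r) ×ˢ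
        Set.Ico ((p.2 : ℝ) * r) ((p.2 + 1 : ℝ) * r))) ^ 2

section
section Geo
variable {N : ℕ} (c b : ℝ) (u v d : Fin N → ℝ)

def wU : List (Fin N) → ℝ
  | [] => 0
  | i :: w => c * wU w + u i

def wD : List (Fin N) → ℝ
  | [] => 0
  | i :: w => d i * c ^ w.length + b * wD w

def wV : List (Fin N) → ℝ
  | [] => 0
  | i :: w => d i * wU c u w + b * wV w + v i

lemma sword_eq (w : List (Fin N)) (p : ℝ × ℝ) : Sword c b u v d w p =
    (c ^ w.length * p.1 + wU c u w, wD c b d w * p.1 + b ^ w.length * p.2 + wV c b u v d w) := by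
  induction w with
  | nil => simp [Sword, wU, wD, wV]
  | cons i w ih =>
    simp only [Sword, Function.comp, ih, Smap, wU, wD, wV, List.length_cons]
    ext <;> simp only <;> ring

lemma wU_append (w w' : List (Fin N)) :
    wU c u (w ++ w') = c ^ w.length * wU c u w' + wU c u w := by
  induction w with
  | nil => simp [wU]
  | cons i w ih => simp only [List.cons_append, wU, ih, List.length_cons]; ring

lemma sword_append (w w' : List (Fin N)) (p : ℝ × ℝ) :
    Sword c b u v d (w ++ w') p = Sword c b u v d w (Sword c b u v d w' p) := by
  induction w with
  | nil => simp [Sword]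
  | cons i w ih => simp [Sword, ih]

variable {c b u v d}

lemma sword_sub (hmaps : ∀ i, Smap c b u v d i '' unitSq ⊆ unitSq) (w : List (Fin N)) :
    Sword c b u v d w '' unitSq ⊆ unitSq := by
  induction w with
  | nil => simp [Sword]
  | cons i w ih =>
    simp only [Sword, image_comp]
    exact (image_mono ih).trans (hmaps i)

lemma sword_append_sub (hmaps : ∀ i, Smap c b u v d i '' unitSq ⊆ unitSq)
    (w w' : List (Fin N)) :
    Sword c b u v d (w ++ w') '' unitSq ⊆ Sword c b u v d w '' unitSq := by
  rintro _ ⟨p, hp, rfl⟩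
  rw [sword_append]
  exact mem_image_of_mem _ (sword_sub hmaps w' (mem_image_of_mem _ hp))

lemma wD_bound (hb0 : 0 < b) (hbc : b < c) (w : List (Fin N)) :
    |wD c b d w| ≤ (∑ i, |d i|) / (c - b) * c ^ w.length := by
  have hcb : 0 < c - b := sub_pos.2 hbc
  have hc : 0 < c := hb0.trans hbc
  have hs : 0 ≤ ∑ i, |d i| := Finset.sum_nonneg fun i _ => abs_nonneg _
  induction w with
  | nil => simp only [wD, abs_zero]; positivity
  | cons i w ih =>
    simp only [wD, List.length_cons]
    have h1 : |d i| ≤ ∑ i, |d i| :=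
      Finset.single_le_sum (f := fun i => |d i|) (fun i _ => abs_nonneg _) (Finset.mem_univ i)
    have hp : 0 < c ^ w.length := pow_pos hc _
    calc |d i * c ^ w.length + b * wD c b d w|
        ≤ |d i| * c ^ w.length + b * |wD c b d w| := by
          refine (abs_add_le _ _).trans ?_
          rw [abs_mul, abs_mul, abs_of_pos hp, abs_of_pos hb0]
      _ ≤ (∑ i, |d i|) * c ^ w.length + b * ((∑ i, |d i|) / (c - b) * c ^ w.length) := by
          gcongr
      _ = _ := by field_simp; ring

/-- membership in a strip gives the x-range -/
lemma mem_strip_x (hc : 0 < c) {w : List (Fin N)} {p : ℝ × ℝ}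
    (hp : p ∈ Sword c b u v d w '' unitSq) :
    wU c u w ≤ p.1 ∧ p.1 ≤ wU c u w + c ^ w.length := by
  obtain ⟨q, hq, rfl⟩ := hp
  rw [sword_eq]
  have h1 := hq.1.1
  have h2 := hq.1.2
  have hp : 0 < c ^ w.length := pow_pos hc _
  simp only
  constructor <;> nlinarith

/-- vertical slices have height at most `b^n` -/
lemma mem_strip_y (hc : 0 < c) (hb : 0 < b) {w : List (Fin N)} {x y y' : ℝ}
    (hp : (x, y) ∈ Sword c b u v d w '' unitSq) (hp' : (x, y') ∈ Sword c b u v d w '' unitSq) :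
    |y - y'| ≤ b ^ w.length := by
  obtain ⟨q, hq, h⟩ := hp
  obtain ⟨q', hq', h'⟩ := hp'
  rw [sword_eq] at h h'
  simp only [Prod.mk.injEq] at h h'
  have hpc : 0 < c ^ w.length := pow_pos hc _
  have hpb : 0 < b ^ w.length := pow_pos hb _
  have : q.1 = q'.1 := by
    have : c ^ w.length * q.1 = c ^ w.length * q'.1 := by linarith [h.1, h'.1]
    exact mul_left_cancel₀ hpc.ne' this
  have e : y - y' = b ^ w.length * (q.2 - q'.2) := by rw [← h.2, ← h'.2, this]; ring
  rw [e, abs_mul, abs_of_pos hpb]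
  have : |q.2 - q'.2| ≤ 1 := by
    rw [abs_le]; constructor <;> linarith [hq.2.1, hq.2.2, hq'.2.1, hq'.2.2]
  nlinarith

/-- a strip meeting a mesh cell contains a nearby lattice point -/
lemma strip_lattice (hb0 : 0 < b) (hbc : b < c) (hb1 : b < 1) {w : List (Fin N)} {r : ℝ} (hr : 0 < r)
    (hrb : r ≤ b ^ w.length) (hrb' : b ^ (w.length + 1) < r)
    {M : ℕ} (hM : (∑ i, |d i|) / (c - b) + 1 / b + 1 ≤ M) (p : ℤ × ℤ)
    (hne : (Sword c b u v d w '' unitSq ∩ (Set.Ico ((p.1 : ℝ) * r) ((p.1 + 1 : ℝ) * r) ×ˢ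
        Set.Ico ((p.2 : ℝ) * r) ((p.2 + 1 : ℝ) * r))).Nonempty) :
    ∃ f ∈ (Finset.Icc (0:ℤ) 1 ×ˢ Finset.Icc (-(M:ℤ)) M),
      ((((p + f).1 : ℤ) : ℝ) * r, (((p + f).2 : ℤ) : ℝ) * r) ∈ Sword c b u v d w '' unitSq := by
  obtain ⟨z, hz, hzI, hzJ⟩ := hne
  have hc : 0 < c := hb0.trans hbc
  have hx := mem_strip_x hc hz
  obtain ⟨q, hq, rfl⟩ := hz
  rw [sword_eq] at hzI hzJ hx
  simp only at hx
  simp only [mem_Ico] at hzI hzJ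
  have hpc : 0 < c ^ w.length := pow_pos hc _
  have hpb : 0 < b ^ w.length := pow_pos hb0 _
  have hbcn : b ^ w.length ≤ c ^ w.length := pow_le_pow_left₀ hb0.le hbc.le _
  set U := wU c u w
  set V := wV c b u v d w
  set D := wD c b d w with hD
  set K := (∑ i, |d i|) / (c - b) with hK
  have hDb : |D| ≤ K * c ^ w.length := wD_bound hb0 hbc w
  have hK0 : 0 ≤ K := div_nonneg (Finset.sum_nonneg fun i _ => abs_nonneg _) (by linarith)
  set C := c ^ w.length with hC
  set B := b ^ w.length with hB
  -- choose the column
  obtain ⟨e, he, haU, haU', hax⟩ : ∃ e ∈ Finset.Icc (0:ℤ) 1, U ≤ ((p.1 + e : ℤ) : ℝ) * r ∧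
      ((p.1 + e : ℤ) : ℝ) * r ≤ U + C ∧ |((p.1 + e : ℤ) : ℝ) * r - (C * q.1 + U)| ≤ r := by
    by_cases h : U ≤ p.1 * r
    · refine ⟨0, by simp, by simpa using h, ?_, ?_⟩
      · push_cast; nlinarith
      · push_cast; rw [abs_le]; constructor <;> nlinarith
    · push Not at h
      refine ⟨1, by simp, ?_, ?_, ?_⟩
      · push_cast; nlinarith
      · push_cast; nlinarith
      · push_cast; rw [abs_le]; constructor <;> nlinarith
  set a := ((p.1 + e : ℤ) : ℝ) * r with ha
  set s := (a - U) / C with hs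
  have hsC : C * s = a - U := by rw [hs]; field_simp
  have hs0 : 0 ≤ s := div_nonneg (by linarith) hpc.le
  have hs1 : s ≤ 1 := by rw [hs, div_le_one hpc]; linarith
  have hDs : |D * s - D * q.1| ≤ K * r := by
    rw [← mul_sub, abs_mul]
    have h1 : C * |s - q.1| ≤ r := by
      have h2 : C * |s - q.1| = |C * (s - q.1)| := by rw [abs_mul, abs_of_pos hpc]
      rw [h2, mul_sub, hsC]
      convert hax using 2; ring
    calc |D| * |s - q.1| ≤ K * C * |s - q.1| := by gcongr
      _ = K * (C * |s - q.1|) := by ring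
      _ ≤ K * r := by gcongr
  set g : ℤ := ⌈(D * s + V) / r⌉ with hg
  have hg1 : D * s + V ≤ g * r := by
    rw [← div_le_iff₀ hr]; exact Int.le_ceil _
  have hg2 : g * r < D * s + V + r := by
    have := Int.ceil_lt_add_one ((D * s + V) / r)
    rw [← hg] at this
    have h2 : ((g:ℝ) - 1) * r < D * s + V := by
      rw [← lt_div_iff₀ hr]; linarith
    linarith
  have hBr : B ≤ 1 / b * r := by
    rw [pow_succ] at hrb'
    rw [div_mul_eq_mul_div, le_div_iff₀ hb0, one_mul]; exact hrb'.le
  have hDs' := abs_le.1 hDs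
  have hq1 := hq.2.1
  have hq2 := hq.2.2
  have hMr : (K + 1 / b + 1) * r ≤ M * r := by gcongr
  have hgp : |((g - p.2 : ℤ) : ℝ)| ≤ M := by
    have : |((g - p.2 : ℤ) : ℝ)| * r ≤ M * r := by
      rw [← abs_of_pos hr, ← abs_mul, abs_of_pos hr]
      push_cast
      rw [abs_le]
      constructor <;> nlinarith
    exact le_of_mul_le_mul_right this hr
  have hgp' : |g - p.2| ≤ M := by exact_mod_cast hgp
  refine ⟨(e, g - p.2), ?_, ?_⟩
  · rw [Finset.mem_product]; exact ⟨he, by rw [Finset.mem_Icc]; exact abs_le.1 hgp'⟩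
  · refine ⟨(s, (g * r - D * s - V) / B), ⟨⟨hs0, hs1⟩, ?_, ?_⟩, ?_⟩
    · exact div_nonneg (by linarith) hpb.le
    · rw [div_le_one hpb]; linarith
    · rw [sword_eq]
      ext
      · simp only [Prod.fst_add]
        rw [← hC, hsC]; simp [ha, U]
      · simp only [Prod.snd_add]
        rw [← hB, mul_div_cancel₀ _ hpb.ne']
        simp
        ring

end Geo

end

section
lemma frostman {m : Measure ℝ} {q : ℝ} (hq : 1 < q) (h : HasLqDensity m q) :
    ∃ C : ℝ, 0 < C ∧ ∀ s t : ℝ, s ≤ t → m (Icc s t) ≤ ENNReal.ofReal (C * (t - s) ^ (1 - 1 / q)) := by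
  obtain ⟨φ, rfl, hφ⟩ := h
  have hq0 : 0 < q := by linarith
  have hθ : 0 < 1 - 1 / q := by
    have : 1 / q < 1 := by rw [div_lt_one hq0]; exact hq
    linarith
  set I := (∫⁻ t, φ t ^ q) ^ (1 / q) with hI
  have hItop : I ≠ ⊤ := ENNReal.rpow_ne_top_of_nonneg (by positivity) hφ.ne
  refine ⟨I.toReal + 1, by positivity, fun s t hst => ?_⟩
  rw [withDensity_apply _ measurableSet_Icc]
  obtain ⟨g, hg, hgle, hgeq⟩ := exists_measurable_le_lintegral_eq (volume.restrict (Icc s t)) φ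
  rw [hgeq]
  have hpq : q.HolderConjugate (1 - 1 / q)⁻¹ := by
    rw [Real.holderConjugate_iff]
    refine ⟨hq, ?_⟩
    rw [inv_inv]; field_simp; ring
  have := ENNReal.lintegral_mul_le_Lp_mul_Lq (volume.restrict (Icc s t)) hpq
    hg.aemeasurable (aemeasurable_const (b := (1 : ℝ≥0∞)))
  simp only [Pi.mul_apply, mul_one, ENNReal.one_rpow, lintegral_const, one_mul,
    Measure.restrict_apply_univ, Real.volume_Icc, one_div, inv_inv] at this
  refine this.trans ?_
  have h1 : (∫⁻ a in Icc s t, g a ^ q) ^ q⁻¹ ≤ I := by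
    rw [hI, one_div]
    refine ENNReal.rpow_le_rpow ?_ (by positivity)
    refine (lintegral_mono (fun a => ENNReal.rpow_le_rpow (hgle a) hq0.le)).trans ?_
    exact setLIntegral_le_lintegral _ _
  rw [one_div] at hθ
  rw [ENNReal.ofReal_rpow_of_nonneg (by linarith) hθ.le, ENNReal.ofReal_mul (by positivity), one_div]
  gcongr
  refine h1.trans ?_
  rw [← ENNReal.ofReal_toReal hItop]
  apply ENNReal.ofReal_le_ofReal
  rw [ENNReal.toReal_ofReal ENNReal.toReal_nonneg]; linarith

lemma prefixWord_add {N : ℕ} (i : ℕ → Fin N) (n k : ℕ) :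
    prefixWord i (n + k) = prefixWord i n ++ List.ofFn (fun j : Fin k => i (n + j)) := by
  unfold prefixWord
  rw [← List.ofFn_fin_append]
  congr 1
  funext x
  refine Fin.addCases (fun a => ?_) (fun a => ?_) x <;> simp

lemma length_prefixWord {N : ℕ} (i : ℕ → Fin N) (n : ℕ) : (prefixWord i n).length = n := by
  simp [prefixWord]

section Meas
variable {N : ℕ} {c b : ℝ} {u v d : Fin N → ℝ}

lemma continuous_sword (w : List (Fin N)) : Continuous (Sword c b u v d w) := by
  have : Sword c b u v d w = fun p => (c ^ w.length * p.1 + wU c u w,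
      wD c b d w * p.1 + b ^ w.length * p.2 + wV c b u v d w) := funext (sword_eq c b u v d w)
  rw [this]; fun_prop

lemma isCompact_strip (w : List (Fin N)) : IsCompact (Sword c b u v d w '' unitSq) :=
  (isCompact_Icc.prod isCompact_Icc).image (continuous_sword w)

lemma pi_mem (hmaps : ∀ i, Smap c b u v d i '' unitSq ⊆ unitSq)
    {Pi : (ℕ → Fin N) → ℝ × ℝ}
    (hPi : ∀ i, Tendsto (fun n => Sword c b u v d (prefixWord i n) 0) atTop (nhds (Pi i)))
    (i : ℕ → Fin N) (n : ℕ) : Pi i ∈ Sword c b u v d (prefixWord i n) '' unitSq := by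
  refine (isCompact_strip _).isClosed.mem_of_tendsto (hPi i) ?_
  filter_upwards [eventually_ge_atTop n] with m hm
  obtain ⟨k, rfl⟩ := Nat.exists_eq_add_of_le hm
  rw [prefixWord_add]
  refine sword_append_sub hmaps _ _ (mem_image_of_mem _ ?_)
  exact ⟨⟨le_rfl, zero_le_one⟩, ⟨le_rfl, zero_le_one⟩⟩

lemma pi_meas {Pi : (ℕ → Fin N) → ℝ × ℝ}
    (hPi : ∀ i, Tendsto (fun n => Sword c b u v d (prefixWord i n) 0) atTop (nhds (Pi i))) :
    Measurable Pi := by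
  refine measurable_of_tendsto_metrizable (f := fun n i => Sword c b u v d (prefixWord i n) 0)
    (fun n => ?_) (tendsto_pi_nhds.2 hPi)
  have h1 : Measurable (fun w : Fin n → Fin N => Sword c b u v d (List.ofFn w) 0) :=
    Measurable.of_discrete
  have h2 : Measurable (fun (i : ℕ → Fin N) (k : Fin n) => i k) := by fun_prop
  exact h1.comp h2

lemma cyl_meas (n : ℕ) (w : Fin n → Fin N) :
    MeasurableSet {x : ℕ → Fin N | ∀ k : Fin n, x (k : ℕ) = w k} := by
  rw [setOf_forall]
  refine MeasurableSet.iInter fun k => ?_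
  exact measurableSet_eq_fun (measurable_pi_apply _) measurable_const

open Classical in
/-- words of length `h` whose x-interval meets `[s,t]` -/
def cnt (c : ℝ) (u : Fin N → ℝ) (h : ℕ) (s t : ℝ) : Finset (Fin h → Fin N) :=
  Finset.univ.filter (fun γ => s ≤ wU c u (List.ofFn γ) + c ^ h ∧ wU c u (List.ofFn γ) ≤ t)

lemma cnt_le (hN : 2 ≤ N) (hc : 0 < c) (hmaps : ∀ i, Smap c b u v d i '' unitSq ⊆ unitSq)
    {Pi : (ℕ → Fin N) → ℝ × ℝ}
    (hPi : ∀ i, Tendsto (fun n => Sword c b u v d (prefixWord i n) 0) atTop (nhds (Pi i)))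
    {μ : Measure (ℕ → Fin N)} (hμ : IsUniformBernoulli N μ) {C θ : ℝ} (hC : 0 < C)
    (hF : ∀ s t : ℝ, s ≤ t → ((μ.map Pi).map Prod.fst) (Icc s t) ≤ ENNReal.ofReal (C * (t - s) ^ θ))
    (h : ℕ) {s t : ℝ} (hst : s ≤ t) :
    ((cnt c u h s t).card : ℝ) ≤ (N:ℝ) ^ h * (C * (t - s + 2 * c ^ h) ^ θ) := by
  have hch : 0 < c ^ h := pow_pos hc _
  have h1 := hF (s - c ^ h) (t + c ^ h) (by linarith)
  have hm := pi_meas hPi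
  rw [Measure.map_map measurable_fst hm, Measure.map_apply (measurable_fst.comp hm)
    measurableSet_Icc] at h1
  have h2 : μ (⋃ γ ∈ cnt c u h s t, {x : ℕ → Fin N | ∀ k : Fin h, x (k : ℕ) = γ k}) ≤
      μ (Prod.fst ∘ Pi ⁻¹' Icc (s - c ^ h) (t + c ^ h)) := by
    refine measure_mono ?_
    intro x hx
    simp only [mem_iUnion, mem_setOf_eq] at hx
    obtain ⟨γ, hγ, hx⟩ := hx
    have hp : prefixWord x h = List.ofFn γ := by
      unfold prefixWord; congr 1; funext k; exact hx k
    have hx2 := mem_strip_x hc (pi_mem hmaps hPi x h)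
    rw [length_prefixWord, hp] at hx2
    simp only [cnt, Finset.mem_filter] at hγ
    refine ⟨?_, ?_⟩
    · show _ ≤ (Pi x).1
      linarith
    · show (Pi x).1 ≤ _
      linarith
  rw [measure_biUnion_finset] at h2
  · simp_rw [hμ.2] at h2
    rw [Finset.sum_const, nsmul_eq_mul] at h2
    have h3 := ENNReal.toReal_mono ENNReal.ofReal_ne_top (h2.trans h1)
    have hNpos : (0:ℝ) < N := by exact_mod_cast (by omega : 0 < N)
    have hnn : 0 ≤ C * (t + c ^ h - (s - c ^ h)) ^ θ :=
      mul_nonneg hC.le (Real.rpow_nonneg (by linarith) _)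
    rw [ENNReal.toReal_ofReal hnn] at h3
    simp only [one_div, ENNReal.toReal_mul, ENNReal.toReal_natCast, ENNReal.toReal_pow,
      ENNReal.toReal_inv] at h3
    rw [inv_pow, ← div_eq_mul_inv, div_le_iff₀ (by positivity)] at h3
    calc _ ≤ _ := h3
      _ = _ := by rw [mul_comm]; congr 3; ring
  · intro γ _ γ' _ hne
    rw [Function.onFun, Set.disjoint_left]
    intro x hx hx'
    apply hne
    funext k
    rw [← hx k, ← hx' k]
  · intro γ _
    exact cyl_meas _ _

open Classical in
lemma nu_le (hmaps : ∀ i, Smap c b u v d i '' unitSq ⊆ unitSq)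
    {Pi : (ℕ → Fin N) → ℝ × ℝ}
    (hPi : ∀ i, Tendsto (fun n => Sword c b u v d (prefixWord i n) 0) atTop (nhds (Pi i)))
    {μ : Measure (ℕ → Fin N)} (hμ : IsUniformBernoulli N μ)
    (n : ℕ) {A : Set (ℝ × ℝ)} (hA : MeasurableSet A) :
    (μ.map Pi) A ≤ ((Finset.univ.filter (fun w : Fin n → Fin N =>
      (Sword c b u v d (List.ofFn w) '' unitSq ∩ A).Nonempty)).card : ℝ≥0∞) *
        (1 / (N : ℝ≥0∞)) ^ n := by
  rw [Measure.map_apply (pi_meas hPi) hA]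
  set F := (Finset.univ.filter (fun w : Fin n → Fin N =>
      (Sword c b u v d (List.ofFn w) '' unitSq ∩ A).Nonempty)) with hF
  have h1 : Pi ⁻¹' A ⊆ ⋃ γ ∈ F, {x : ℕ → Fin N | ∀ k : Fin n, x (k : ℕ) = γ k} := by
    intro x hx
    simp only [mem_iUnion, mem_setOf_eq]
    refine ⟨fun k => x k, ?_, fun k => rfl⟩
    simp only [hF, Finset.mem_filter, Finset.mem_univ, true_and]
    exact ⟨Pi x, pi_mem hmaps hPi x n, hx⟩
  refine (measure_mono h1).trans ((measure_biUnion_finset_le _ _).trans ?_)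
  simp_rw [hμ.2]
  rw [Finset.sum_const, nsmul_eq_mul]

open Classical in
/-- number of long words in terms of short words -/
lemma card_long (hc : 0 < c) (hmaps : ∀ i, Smap c b u v d i '' unitSq ⊆ unitSq)
    (n h : ℕ) {A : Set (ℝ × ℝ)} {s t X : ℝ} (hA : ∀ p ∈ A, s ≤ p.1 ∧ p.1 ≤ t)
    (hX : ∀ U : ℝ, ((cnt c u h ((s - U) / c ^ n) ((t - U) / c ^ n)).card : ℝ) ≤ X) :
    ((Finset.univ.filter (fun w : Fin (n + h) → Fin N =>
      (Sword c b u v d (List.ofFn w) '' unitSq ∩ A).Nonempty)).card : ℝ) ≤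
    ((Finset.univ.filter (fun w : Fin n → Fin N =>
      (Sword c b u v d (List.ofFn w) '' unitSq ∩ A).Nonempty)).card : ℝ) * X := by
  set F := (Finset.univ.filter (fun w : Fin n → Fin N =>
      (Sword c b u v d (List.ofFn w) '' unitSq ∩ A).Nonempty)) with hF
  have hcn : 0 < c ^ n := pow_pos hc _
  have h1 : (Finset.univ.filter (fun w : Fin (n + h) → Fin N =>
      (Sword c b u v d (List.ofFn w) '' unitSq ∩ A).Nonempty)) ⊆
      (F.sigma (fun α => cnt c u h ((s - wU c u (List.ofFn α)) / c ^ n)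
        ((t - wU c u (List.ofFn α)) / c ^ n))).image (fun x => Fin.append x.1 x.2) := by
    intro w hw
    simp only [Finset.mem_filter, Finset.mem_univ, true_and] at hw
    obtain ⟨z, hz, hzA⟩ := hw
    obtain ⟨⟨α, γ⟩, rfl⟩ := (Fin.appendEquiv n h).surjective w
    simp only [Fin.appendEquiv, Equiv.coe_fn_mk] at hz
    rw [Finset.mem_image]
    refine ⟨⟨α, γ⟩, ?_, rfl⟩
    rw [List.ofFn_fin_append] at hz
    simp only [Finset.mem_sigma, hF, Finset.mem_filter, Finset.mem_univ, true_and, cnt]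
    refine ⟨⟨z, sword_append_sub hmaps _ _ hz, hzA⟩, ?_⟩
    have hx := mem_strip_x hc hz
    rw [wU_append] at hx
    simp only [List.length_append, List.length_ofFn, pow_add] at hx
    have hA' := hA z hzA
    rw [div_le_iff₀ hcn, le_div_iff₀ hcn]
    constructor <;> nlinarith
  have h2 := (Finset.card_le_card h1).trans Finset.card_image_le
  rw [Finset.card_sigma] at h2
  calc _ ≤ ((∑ α ∈ F, (cnt c u h ((s - wU c u (List.ofFn α)) / c ^ n)
        ((t - wU c u (List.ofFn α)) / c ^ n)).card : ℕ) : ℝ) := by exact_mod_cast h2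
    _ ≤ ∑ α ∈ F, X := by push_cast; exact Finset.sum_le_sum fun α _ => hX _
    _ = _ := by rw [Finset.sum_const, nsmul_eq_mul]

end Meas

end

section
lemma int_card_le (T : Finset ℤ) {δ : ℝ} (hδ : 0 ≤ δ) (h : ∀ x ∈ T, ∀ y ∈ T, ((x : ℝ) - y) ≤ δ) :
    (T.card : ℝ) ≤ δ + 1 := by
  rcases T.eq_empty_or_nonempty with rfl | hT
  · simp; linarith
  · have h1 : T ⊆ Finset.Icc (T.min' hT) (T.max' hT) := fun x hx =>
      Finset.mem_Icc.2 ⟨T.min'_le x hx, T.le_max' x hx⟩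
    have h2 := Finset.card_le_card h1
    rw [Int.card_Icc] at h2
    have h3 := h _ (T.max'_mem hT) _ (T.min'_mem hT)
    have h4 : T.min' hT ≤ T.max' hT := T.min'_le _ (T.max'_mem hT)
    have h5 : (T.card : ℤ) ≤ T.max' hT + 1 - T.min' hT := by omega
    have h6 : (T.card : ℝ) ≤ T.max' hT + 1 - T.min' hT := by exact_mod_cast h5
    linarith

section Pairs
variable {N : ℕ} {c b : ℝ} {u v d : Fin N → ℝ}

open Classical in
lemma cell_le (hN : 2 ≤ N) (hc : 0 < c) (hc1 : c < 1)
    (hmaps : ∀ i, Smap c b u v d i '' unitSq ⊆ unitSq)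
    {Pi : (ℕ → Fin N) → ℝ × ℝ}
    (hPi : ∀ i, Tendsto (fun n => Sword c b u v d (prefixWord i n) 0) atTop (nhds (Pi i)))
    {μ : Measure (ℕ → Fin N)} (hμ : IsUniformBernoulli N μ) {C θ : ℝ} (hC : 0 < C)
    (hθ0 : 0 < θ) (hθ1 : θ ≤ 1)
    (hF : ∀ s t : ℝ, s ≤ t → ((μ.map Pi).map Prod.fst) (Icc s t) ≤ ENNReal.ofReal (C * (t - s) ^ θ))
    (n : ℕ) {r : ℝ} (hr : 0 < r) (p : ℤ × ℤ) :
    ((μ.map Pi) (Set.Ico ((p.1 : ℝ) * r) ((p.1 + 1 : ℝ) * r) ×ˢ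
        Set.Ico ((p.2 : ℝ) * r) ((p.2 + 1 : ℝ) * r))).toReal ≤
    ((Finset.univ.filter (fun w : Fin n → Fin N =>
      (Sword c b u v d (List.ofFn w) '' unitSq ∩ (Set.Ico ((p.1 : ℝ) * r) ((p.1 + 1 : ℝ) * r) ×ˢ
        Set.Ico ((p.2 : ℝ) * r) ((p.2 + 1 : ℝ) * r))).Nonempty)).card : ℝ) *
      (3 * C * (r / c ^ n) ^ θ / (N:ℝ) ^ n) := by
  set A := (Set.Ico ((p.1 : ℝ) * r) ((p.1 + 1 : ℝ) * r) ×ˢ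
        Set.Ico ((p.2 : ℝ) * r) ((p.2 + 1 : ℝ) * r)) with hA
  have hAm : MeasurableSet A := measurableSet_Ico.prod measurableSet_Ico
  have hcn : 0 < c ^ n := pow_pos hc _
  have hrc : 0 < r / c ^ n := div_pos hr hcn
  have hNpos : (0:ℝ) < N := by exact_mod_cast (by omega : 0 < N)
  obtain ⟨h, hh⟩ := exists_pow_lt_of_lt_one hrc hc1
  have hnu := nu_le hmaps hPi hμ (n + h) hAm
  have h3 := ENNReal.toReal_mono (by
    refine ENNReal.mul_ne_top (ENNReal.natCast_ne_top _) (ENNReal.pow_ne_top ?_)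
    simp only [one_div, ne_eq, ENNReal.inv_eq_top, Nat.cast_eq_zero]; omega) hnu
  simp only [one_div, ENNReal.toReal_mul, ENNReal.toReal_natCast, ENNReal.toReal_pow,
      ENNReal.toReal_inv] at h3
  have hlong := card_long (v := v) (d := d) (b := b) hc hmaps n h (A := A) (s := p.1 * r) (t := (p.1 + 1) * r)
    (X := (N:ℝ) ^ h * (3 * C * (r / c ^ n) ^ θ)) (fun q hq => ⟨hq.1.1, hq.1.2.le⟩) (by
      intro U
      refine (cnt_le hN hc hmaps hPi hμ hC hF h ?_).trans ?_
      · gcongr; linarith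
      · rw [mul_comm 3 C, mul_assoc C]
        gcongr
        have e : ((p.1 + 1) * r - U) / c ^ n - (p.1 * r - U) / c ^ n = r / c ^ n := by
          field_simp; ring
        rw [e]
        calc (r / c ^ n + 2 * c ^ h) ^ θ ≤ (3 * (r / c ^ n)) ^ θ := by
              apply Real.rpow_le_rpow (by positivity) (by linarith) hθ0.le
          _ = 3 ^ θ * (r / c ^ n) ^ θ := Real.mul_rpow (by norm_num) hrc.le
          _ ≤ 3 * (r / c ^ n) ^ θ := by
              gcongr
              calc (3:ℝ) ^ θ ≤ 3 ^ (1:ℝ) := Real.rpow_le_rpow_of_exponent_le (by norm_num) hθ1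
                _ = 3 := Real.rpow_one _)
  refine h3.trans ?_
  calc _ ≤ _ := mul_le_mul_of_nonneg_right hlong (by positivity)
    _ = _ := by rw [pow_add, inv_pow, inv_pow]; field_simp

/-- x-projection of the intersection of two strips -/
def PP (c b : ℝ) (u v d : Fin N → ℝ) (w w' : List (Fin N)) : Set ℝ :=
  Prod.fst '' (Sword c b u v d w '' unitSq ∩ Sword c b u v d w' '' unitSq)

lemma PP_bdd (w w' : List (Fin N)) : Bornology.IsBounded (PP c b u v d w w') :=
  (((isCompact_strip w).inter (isCompact_strip w')).image continuous_fst).isBounded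

lemma PP_cons (hc : 0 < c) (hb : 0 < b) (i : Fin N) (w w' : List (Fin N)) :
    Metric.diam (PP c b u v d (i :: w) (i :: w')) ≤ c * Metric.diam (PP c b u v d w w') ∧
    ((Sword c b u v d (i :: w) '' unitSq ∩ Sword c b u v d (i :: w') '' unitSq).Nonempty →
      (Sword c b u v d w '' unitSq ∩ Sword c b u v d w' '' unitSq).Nonempty) := by
  have hinj : Function.Injective (Smap c b u v d i) := by
    intro p q h
    simp only [Smap, Prod.mk.injEq] at h
    have h1 : p.1 = q.1 := mul_left_cancel₀ hc.ne' (by linarith [h.1])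
    have h2 : p.2 = q.2 := mul_left_cancel₀ hb.ne' (by have := h.2; rw [h1] at this; linarith)
    exact Prod.ext h1 h2
  have key : Sword c b u v d (i :: w) '' unitSq ∩ Sword c b u v d (i :: w') '' unitSq =
      Smap c b u v d i '' (Sword c b u v d w '' unitSq ∩ Sword c b u v d w' '' unitSq) := by
    rw [image_inter hinj]; simp only [Sword, image_comp]
  constructor
  · refine Metric.diam_le_of_forall_dist_le (mul_nonneg hc.le Metric.diam_nonneg) ?_
    rintro x hx y hy
    unfold PP at hx hy
    rw [key] at hx hy
    obtain ⟨_, ⟨p, hp, rfl⟩, rfl⟩ := hx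
    obtain ⟨_, ⟨q, hq, rfl⟩, rfl⟩ := hy
    have := Metric.dist_le_diam_of_mem (PP_bdd (c := c) (b := b) (u := u) (v := v) (d := d) w w')
      (mem_image_of_mem Prod.fst hp) (mem_image_of_mem Prod.fst hq)
    simp only [Smap]
    rw [Real.dist_eq] at this ⊢
    have e : c * p.1 + u i - (c * q.1 + u i) = c * (p.1 - q.1) := by ring
    rw [e, abs_mul, abs_of_pos hc]
    gcongr
  · rw [key]; exact fun h => image_nonempty.1 h

open Classical in
/-- intersecting pairs of words of length n -/
def Meet (c b : ℝ) (u v d : Fin N → ℝ) (n : ℕ) : Finset ((Fin n → Fin N) × (Fin n → Fin N)) :=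
  Finset.univ.filter (fun x => (Sword c b u v d (List.ofFn x.1) '' unitSq ∩
    Sword c b u v d (List.ofFn x.2) '' unitSq).Nonempty)

open Classical in
/-- intersecting pairs with different first letters -/
def MeetD (c b : ℝ) (u v d : Fin N → ℝ) (n : ℕ) : Finset ((Fin n → Fin N) × (Fin n → Fin N)) :=
  (Meet c b u v d n).filter (fun x => ∃ h : 0 < n, x.1 ⟨0, h⟩ ≠ x.2 ⟨0, h⟩)

/-- the transversality bound -/
def Tr (c b : ℝ) (u v d : Fin N → ℝ) (c₃ : ℝ) : Prop :=
  ∀ n, ∀ x ∈ MeetD c b u v d n, Metric.diam (PP c b u v d (List.ofFn x.1) (List.ofFn x.2)) ≤ c₃ * b ^ n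

lemma tr_of (hb : 0 < b) (h : Transversality N c b u v d) : ∃ c₃ : ℝ, 1 ≤ c₃ ∧ Tr c b u v d c₃ := by
  obtain ⟨c₃, hc₃, h⟩ := h
  refine ⟨max 1 c₃, le_max_left _ _, ?_⟩
  rintro n ⟨α, β⟩ hx
  simp only [MeetD, Finset.mem_filter] at hx
  obtain ⟨_, hn, hne⟩ := hx
  have ext : ∀ α : Fin n → Fin N, prefixWord (fun k => if h : k < n then α ⟨k, h⟩ else α ⟨0, hn⟩) n
      = List.ofFn α := by
    intro α; unfold prefixWord; congr 1; funext k; simp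
  have := h n (fun k => if h : k < n then α ⟨k, h⟩ else α ⟨0, hn⟩)
    (fun k => if h : k < n then β ⟨k, h⟩ else β ⟨0, hn⟩) (by simpa [hn] using hne)
  rw [ext, ext] at this
  refine this.le.trans ?_
  gcongr
  exact le_max_right _ _

/-- total weight -/
def WW (c b : ℝ) (u v d : Fin N → ℝ) (n : ℕ) (t : ℝ) : ℝ :=
  ∑ x ∈ Meet c b u v d n, (Metric.diam (PP c b u v d (List.ofFn x.1) (List.ofFn x.2)) * t + 1)

open Classical in
lemma WW_succ (hc : 0 < c) (hb : 0 < b) {c₃ : ℝ} (htr : Tr c b u v d c₃) (n : ℕ) {t : ℝ}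
    (ht : 0 ≤ t) : WW c b u v d (n + 1) t ≤ N * WW c b u v d n (c * t) +
      (MeetD c b u v d (n + 1)).card * (c₃ * b ^ (n + 1) * t + 1) := by
  unfold WW
  rw [← Finset.sum_filter_not_add_sum_filter (Meet c b u v d (n+1))
    (fun x => ∃ h : 0 < n + 1, x.1 ⟨0, h⟩ ≠ x.2 ⟨0, h⟩)]
  gcongr ?_ + ?_
  · have hsub : (Meet c b u v d (n+1)).filter
        (fun x => ¬ ∃ h : 0 < n + 1, x.1 ⟨0, h⟩ ≠ x.2 ⟨0, h⟩) ⊆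
        ((Finset.univ : Finset (Fin N)) ×ˢ Meet c b u v d n).image
          (fun y => ((Fin.cons y.1 y.2.1 : Fin (n+1) → Fin N), (Fin.cons y.1 y.2.2 : Fin (n+1) → Fin N))) := by
      rintro ⟨α, β⟩ hx
      simp only [Finset.mem_filter, Meet, Finset.mem_univ, true_and, not_exists, not_not] at hx
      obtain ⟨hx, h0⟩ := hx
      have h0 : α 0 = β 0 := h0 (Nat.succ_pos n)
      rw [Finset.mem_image]
      refine ⟨(α 0, (Fin.tail α, Fin.tail β)), ?_, ?_⟩
      · simp only [Finset.mem_product, Finset.mem_univ, true_and, Meet, Finset.mem_filter]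
        apply (PP_cons hc hb (α 0) _ _).2
        have e1 : α 0 :: List.ofFn (Fin.tail α) = List.ofFn α := by
          rw [List.ofFn_succ]; rfl
        have e2 : α 0 :: List.ofFn (Fin.tail β) = List.ofFn β := by
          rw [h0, List.ofFn_succ]; rfl
        rw [e1, e2]; exact hx
      · simp only [Fin.cons_self_tail, Prod.mk.injEq, true_and]
        rw [h0, Fin.cons_self_tail]
    refine (Finset.sum_le_sum_of_subset_of_nonneg hsub (fun x _ _ => by
      have := Metric.diam_nonneg (s := PP c b u v d (List.ofFn x.1) (List.ofFn x.2)); positivity)).trans ?_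
    rw [Finset.sum_image, Finset.sum_product]
    · calc _ ≤ ∑ i : Fin N, ∑ x ∈ Meet c b u v d n,
            (Metric.diam (PP c b u v d (List.ofFn x.1) (List.ofFn x.2)) * (c * t) + 1) := by
            refine Finset.sum_le_sum fun i _ => Finset.sum_le_sum fun x _ => ?_
            simp only [List.ofFn_cons]
            have := (PP_cons (u := u) (v := v) (d := d) hc hb i (List.ofFn x.1) (List.ofFn x.2)).1
            have := mul_le_mul_of_nonneg_right this ht
            linarith
        _ = _ := by rw [Finset.sum_const, nsmul_eq_mul, Finset.card_univ, Fintype.card_fin]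
    · rintro ⟨i, α, β⟩ _ ⟨j, α', β'⟩ _ h
      simp only [Prod.mk.injEq, Fin.cons_inj] at h
      simp only [Prod.mk.injEq]; tauto
  · have : (Meet c b u v d (n+1)).filter (fun x => ∃ h : 0 < n + 1, x.1 ⟨0, h⟩ ≠ x.2 ⟨0, h⟩) =
        MeetD c b u v d (n+1) := rfl
    rw [this, ← nsmul_eq_mul, ← Finset.sum_const]
    refine Finset.sum_le_sum fun x hx => ?_
    have := mul_le_mul_of_nonneg_right (htr _ x hx) ht
    linarith

lemma WW_zero {t : ℝ} (ht : 0 ≤ t) : WW c b u v d 0 t ≤ t + 1 := by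
  unfold WW
  have hd : Metric.diam (PP c b u v d [] []) ≤ 1 := by
    refine Metric.diam_le_of_forall_dist_le zero_le_one ?_
    rintro x ⟨p, ⟨⟨p, hp, rfl⟩, _⟩, rfl⟩ y ⟨q, ⟨⟨q, hq, rfl⟩, _⟩, rfl⟩
    simp only [Sword, id]
    rw [Real.dist_eq, abs_le]
    constructor <;> linarith [hp.1.1, hp.1.2, hq.1.1, hq.1.2]
  have h0 : ∀ x : (Fin 0 → Fin N) × (Fin 0 → Fin N),
      (Metric.diam (PP c b u v d (List.ofFn x.1) (List.ofFn x.2)) * t + 1) ≤ t + 1 := by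
    intro x
    simp only [List.ofFn_zero]
    nlinarith
  refine (Finset.sum_le_sum fun x _ => h0 x).trans ?_
  rw [Finset.sum_const, nsmul_eq_mul]
  have : (Meet c b u v d 0).card ≤ 1 := by
    refine (Finset.card_le_univ _).trans ?_
    simp
  have : ((Meet c b u v d 0).card : ℝ) ≤ 1 := by exact_mod_cast this
  nlinarith

lemma WW_le (hc : 0 < c) (hb : 0 < b) {c₃ : ℝ} (hc₃ : 1 ≤ c₃) (htr : Tr c b u v d c₃)
    {A' : ℕ → ℝ} (hA0 : 1 ≤ A' 0) (hA : ∀ m, ((MeetD c b u v d m).card : ℝ) ≤ A' m) (n : ℕ) :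
    ∀ t : ℝ, 0 ≤ t → WW c b u v d n t ≤ ∑ k ∈ Finset.range (n + 1),
      (N:ℝ) ^ k * A' (n - k) * (c₃ * b ^ (n - k) * c ^ k * t + 1) := by
  induction n with
  | zero =>
    intro t ht
    refine (WW_zero ht).trans ?_
    simp only [zero_add, Finset.range_one, Finset.sum_singleton, pow_zero, one_mul, mul_one, Nat.sub_self]
    calc t + 1 ≤ 1 * (c₃ * t + 1) := by nlinarith
      _ ≤ _ := by gcongr
  | succ n ih =>
    intro t ht
    refine (WW_succ hc hb htr n ht).trans ?_
    rw [Finset.sum_range_succ']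
    refine add_le_add ?_ ?_
    · refine (mul_le_mul_of_nonneg_left (ih (c * t) (by positivity)) (Nat.cast_nonneg _)).trans ?_
      rw [Finset.mul_sum]
      refine Finset.sum_le_sum fun k _ => le_of_eq ?_
      rw [Nat.add_sub_add_right]; ring
    · simp only [pow_zero, one_mul, mul_one, Nat.sub_zero]
      have := hA (n+1)
      gcongr
end Pairs

end

section
section Fin
variable {N : ℕ} {c b : ℝ} {u v d : Fin N → ℝ}

open Classical in
lemma MeetD_add (hc : 0 < c) (hb : 0 < b) (hmaps : ∀ i, Smap c b u v d i '' unitSq ⊆ unitSq)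
    {c₃ : ℝ} (htr : Tr c b u v d c₃) {m : ℕ} (hm : 0 < m) (h : ℕ) {X : ℝ} (hX0 : 0 ≤ X)
    (hX : ∀ s t : ℝ, t - s = c₃ * b ^ m / c ^ m → ((cnt c u h s t).card : ℝ) ≤ X) :
    ((MeetD c b u v d (m + h)).card : ℝ) ≤ (MeetD c b u v d m).card * X ^ 2 := by
  have hcm : 0 < c ^ m := pow_pos hc _
  let s : (Fin m → Fin N) × (Fin m → Fin N) → ℝ :=
    fun x => sInf (PP c b u v d (List.ofFn x.1) (List.ofFn x.2))
  let G : (Fin m → Fin N) × (Fin m → Fin N) → (Fin m → Fin N) → Finset (Fin h → Fin N) :=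
    fun x α => cnt c u h ((s x - wU c u (List.ofFn α)) / c ^ m)
      ((s x + c₃ * b ^ m - wU c u (List.ofFn α)) / c ^ m)
  have hG : ∀ x α, ((G x α).card : ℝ) ≤ X := by
    intro x α
    apply hX
    field_simp; ring
  have h1 : MeetD c b u v d (m + h) ⊆
      ((MeetD c b u v d m).sigma (fun x => G x x.1 ×ˢ G x x.2)).image
        (fun y => (Fin.append y.1.1 y.2.1, Fin.append y.1.2 y.2.2)) := by
    rintro ⟨w, w'⟩ hw
    obtain ⟨⟨α, γ⟩, rfl⟩ := (Fin.appendEquiv m h).surjective w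
    obtain ⟨⟨β, γ'⟩, rfl⟩ := (Fin.appendEquiv m h).surjective w'
    simp only [Fin.appendEquiv, Equiv.coe_fn_mk, MeetD, Meet, Finset.mem_filter, Finset.mem_univ,
      true_and] at hw
    obtain ⟨⟨z, hz, hz'⟩, hmh, hne⟩ := hw
    rw [List.ofFn_fin_append] at hz hz'
    have hza := sword_append_sub hmaps _ _ hz
    have hzb := sword_append_sub hmaps _ _ hz'
    have hmem : (α, β) ∈ MeetD c b u v d m := by
      simp only [MeetD, Meet, Finset.mem_filter, Finset.mem_univ, true_and]
      refine ⟨⟨z, hza, hzb⟩, hm, ?_⟩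
      have e : (⟨0, hmh⟩ : Fin (m + h)) = Fin.castAdd h ⟨0, hm⟩ := rfl
      rw [e, Fin.append_left, Fin.append_left] at hne
      exact hne
    rw [Finset.mem_image]
    refine ⟨⟨(α, β), (γ, γ')⟩, ?_, rfl⟩
    have hzP : z.1 ∈ PP c b u v d (List.ofFn α) (List.ofFn β) := ⟨z, ⟨hza, hzb⟩, rfl⟩
    have hbd := PP_bdd (c := c) (b := b) (u := u) (v := v) (d := d) (List.ofFn α) (List.ofFn β)
    have hd := htr _ _ hmem
    simp only [Real.diam_eq hbd] at hd
    have hlo : s (α, β) ≤ z.1 := csInf_le hbd.bddBelow hzP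
    have hhi : z.1 ≤ s (α, β) + c₃ * b ^ m := by
      have := le_csSup hbd.bddAbove hzP
      show z.1 ≤ sInf _ + _
      linarith
    have hx := mem_strip_x hc hz
    have hx' := mem_strip_x hc hz'
    rw [wU_append] at hx hx'
    simp only [List.length_append, List.length_ofFn, pow_add] at hx hx'
    simp only [Finset.mem_sigma, Finset.mem_product]
    refine ⟨hmem, ?_, ?_⟩
    · simp only [G, cnt, Finset.mem_filter, Finset.mem_univ, true_and]
      rw [div_le_iff₀ hcm, le_div_iff₀ hcm]
      constructor <;> nlinarith
    · simp only [G, cnt, Finset.mem_filter, Finset.mem_univ, true_and]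
      rw [div_le_iff₀ hcm, le_div_iff₀ hcm]
      constructor <;> nlinarith
  have h2 := (Finset.card_le_card h1).trans Finset.card_image_le
  rw [Finset.card_sigma] at h2
  calc _ ≤ ((∑ x ∈ MeetD c b u v d m, (G x x.1 ×ˢ G x x.2).card : ℕ) : ℝ) := by exact_mod_cast h2
    _ ≤ ∑ x ∈ MeetD c b u v d m, X ^ 2 := by
        push_cast
        refine Finset.sum_le_sum fun x _ => ?_
        rw [Finset.card_product, pow_two]
        push_cast
        exact mul_le_mul (hG _ _) (hG _ _) (Nat.cast_nonneg _) hX0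
    _ = _ := by rw [Finset.sum_const, nsmul_eq_mul]

/-- abstract growth lemma -/
lemma growth {a : ℕ → ℝ} {Q : ℝ} (hQ : 0 < Q) (ha : ∀ m, 0 ≤ a m) {h m₀ : ℕ} (hh : 0 < h)
    (hrec : ∀ m, m₀ ≤ m → a (m + h) ≤ a m * Q ^ h) :
    ∃ K : ℝ, 1 ≤ K ∧ ∀ m, a m ≤ K * Q ^ m := by
  have hn : ∀ m, 0 ≤ a m / Q ^ m := fun m => div_nonneg (ha m) (by positivity)
  refine ⟨1 + ∑ m ∈ Finset.range (m₀ + h), a m / Q ^ m, ?_, ?_⟩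
  · have := Finset.sum_nonneg (s := Finset.range (m₀ + h)) (fun m _ => hn m)
    linarith
  · intro m
    induction m using Nat.strong_induction_on with
    | _ m ih =>
      by_cases hm : m < m₀ + h
      · have := Finset.single_le_sum (f := fun m => a m / Q ^ m) (fun i _ => hn i)
          (Finset.mem_range.2 hm)
        rw [← div_le_iff₀ (by positivity)]
        linarith
      · obtain ⟨k, rfl⟩ : ∃ k, m = k + h := ⟨m - h, by omega⟩
        refine (hrec k (by omega)).trans ?_
        rw [pow_add, ← mul_assoc]
        have := ih k (by omega)
        gcongr

lemma MeetD_growth (hN : 2 ≤ N) (hb : 0 < b) (hbc : b < c) (hc1 : c < 1)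
    (hmaps : ∀ i, Smap c b u v d i '' unitSq ⊆ unitSq)
    {C θ θ' c₃ : ℝ} (hC : 0 < C) (hθ0 : 0 < θ) (hθ1 : θ ≤ 1) (hθ' : θ' < θ) (hc₃ : 1 ≤ c₃)
    (hcnt : ∀ (h : ℕ) (s t : ℝ), s ≤ t →
      ((cnt c u h s t).card : ℝ) ≤ (N:ℝ) ^ h * (C * (t - s + 2 * c ^ h) ^ θ))
    (htr : Tr c b u v d c₃) :
    ∃ K : ℝ, 1 ≤ K ∧ ∀ m, ((MeetD c b u v d m).card : ℝ) ≤ K * (((N:ℝ) * c ^ θ') ^ 2) ^ m := by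
  have hc : 0 < c := hb.trans hbc
  have hNpos : (0:ℝ) < N := by exact_mod_cast (by omega : 0 < N)
  have hcd : 0 < c ^ (θ - θ') := Real.rpow_pos_of_pos hc _
  have hcd1 : c ^ (θ - θ') < 1 := Real.rpow_lt_one hc.le hc1 (by linarith)
  obtain ⟨h, hh⟩ := exists_pow_lt_of_lt_one (show (0:ℝ) < min 1 (1 / (3 * C)) by positivity) hcd1
  have hh0 : 0 < h := by
    rcases Nat.eq_zero_or_pos h with rfl | h0
    · exact absurd (hh.trans_le (min_le_left _ _)) (by simp)
    · exact h0
  have hh1 : 3 * C * (c ^ (θ - θ')) ^ h ≤ 1 := by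
    have := (hh.trans_le (min_le_right _ _)).le
    rw [le_div_iff₀ (by positivity)] at this
    linarith
  have hbc1 : b / c < 1 := by rw [div_lt_one hc]; exact hbc
  have hch : 0 < c ^ h := pow_pos hc _
  obtain ⟨m₁, hm₁⟩ := exists_pow_lt_of_lt_one (show (0:ℝ) < c ^ h / c₃ by positivity) hbc1
  refine growth (h := h) (m₀ := m₁ + 1) (by positivity) (fun m => Nat.cast_nonneg _) hh0 ?_
  intro m hm
  have hbm : c₃ * b ^ m / c ^ m ≤ c ^ h := by
    have h1 : (b / c) ^ m ≤ (b / c) ^ m₁ :=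
      pow_le_pow_of_le_one (by positivity) hbc1.le (by omega)
    have h2 := h1.trans hm₁.le
    rw [le_div_iff₀ (by positivity), div_pow] at h2
    calc _ = b ^ m / c ^ m * c₃ := by ring
      _ ≤ _ := h2
  refine (MeetD_add (X := ((N:ℝ) * c ^ θ') ^ h) hc hb hmaps htr (by omega) h (by positivity) ?_).trans ?_
  · intro s t hst
    have hpos : 0 ≤ c₃ * b ^ m / c ^ m := by positivity
    refine (hcnt h s t (by linarith)).trans ?_
    rw [hst, mul_pow]
    gcongr
    have e : (c ^ h) ^ θ = (c ^ θ') ^ h * (c ^ (θ - θ')) ^ h := by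
      rw [← mul_pow, ← Real.rpow_add hc, ← Real.rpow_natCast, ← Real.rpow_mul hc.le,
        ← Real.rpow_natCast, ← Real.rpow_mul hc.le]
      congr 1; ring
    calc C * (c₃ * b ^ m / c ^ m + 2 * c ^ h) ^ θ ≤ C * (3 * c ^ h) ^ θ := by
          gcongr; linarith
      _ = C * (3 ^ θ * (c ^ h) ^ θ) := by rw [Real.mul_rpow (by norm_num) hch.le]
      _ ≤ C * (3 * (c ^ h) ^ θ) := by
          gcongr
          calc (3:ℝ) ^ θ ≤ 3 ^ (1:ℝ) := Real.rpow_le_rpow_of_exponent_le (by norm_num) hθ1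
            _ = 3 := Real.rpow_one _
      _ = (c ^ θ') ^ h * (3 * C * (c ^ (θ - θ')) ^ h) := by rw [e]; ring
      _ ≤ (c ^ θ') ^ h * 1 := by gcongr
      _ = _ := mul_one _
  · rw [← pow_mul, ← pow_mul, mul_comm h 2]

open Classical in
/-- number of strips of level `n` through a lattice point -/
def HH (c b : ℝ) (u v d : Fin N → ℝ) (n : ℕ) (r : ℝ) (p : ℤ × ℤ) : Finset (Fin n → Fin N) :=
  Finset.univ.filter (fun α => ((p.1 : ℝ) * r, (p.2 : ℝ) * r) ∈ Sword c b u v d (List.ofFn α) '' unitSq)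

open Classical in
lemma lattice_count (hc : 0 < c) (hb : 0 < b) (n : ℕ) {r : ℝ} (hr : 0 < r)
    (hrb' : b ^ (n + 1) < r) {D : ℕ} (hD : 1 / b + 1 ≤ D) (T : Finset (ℤ × ℤ)) :
    ∑ p ∈ T, ((HH c b u v d n r p).card : ℝ) ^ 2 ≤ D * WW c b u v d n (1 / r) := by
  have hsq : ∀ p, ((HH c b u v d n r p).card : ℝ) ^ 2 =
      ∑ x ∈ Meet c b u v d n, if x ∈ HH c b u v d n r p ×ˢ HH c b u v d n r p then (1:ℝ) else 0 := by
    intro p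
    rw [pow_two, ← Nat.cast_mul, ← Finset.card_product, Finset.sum_boole]
    congr 2
    ext x
    simp only [Finset.mem_filter, Finset.mem_product, HH, Meet, Finset.mem_univ, true_and]
    constructor
    · rintro ⟨h1, h2⟩; exact ⟨⟨_, h1, h2⟩, h1, h2⟩
    · exact fun h => h.2
  simp_rw [hsq]
  rw [Finset.sum_comm, WW, Finset.mul_sum]
  refine Finset.sum_le_sum fun x hx => ?_
  rw [Finset.sum_boole]
  set T' := T.filter (fun p => x ∈ HH c b u v d n r p ×ˢ HH c b u v d n r p) with hT'
  have hmem : ∀ p ∈ T', ((p.1 : ℝ) * r, (p.2 : ℝ) * r) ∈ Sword c b u v d (List.ofFn x.1) '' unitSq ∩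
      Sword c b u v d (List.ofFn x.2) '' unitSq := by
    intro p hp
    simp only [hT', Finset.mem_filter, Finset.mem_product, HH, Finset.mem_univ, true_and] at hp
    exact hp.2
  have h1 : T'.card ≤ D * (T'.image Prod.fst).card := by
    refine Finset.card_le_mul_card_image _ _ ?_
    intro k _
    have hinj : (T'.filter (fun p => p.1 = k)).card = ((T'.filter (fun p => p.1 = k)).image Prod.snd).card := by
      rw [Finset.card_image_of_injOn]
      rintro ⟨a, e⟩ ha ⟨a', e'⟩ ha' he
      simp only [Finset.coe_filter, mem_ofPred_eq] at ha ha'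
      simp only at he
      rw [Prod.mk.injEq]
      exact ⟨ha.2.trans ha'.2.symm, he⟩
    have h2 := int_card_le ((T'.filter (fun p => p.1 = k)).image Prod.snd) (δ := 1 / b) (by positivity) (by
      intro y hy y' hy'
      rw [Finset.mem_image] at hy hy'
      obtain ⟨p, hp, rfl⟩ := hy
      obtain ⟨p', hp', rfl⟩ := hy'
      rw [Finset.mem_filter] at hp hp'
      have e1 := (hmem p hp.1).1
      have e2 := (hmem p' hp'.1).1
      rw [hp.2] at e1
      rw [hp'.2] at e2
      have := mem_strip_y hc hb e1 e2
      rw [List.length_ofFn, ← sub_mul] at this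
      have h3 := (le_abs_self _).trans this
      rw [le_div_iff₀ hb]
      rw [pow_succ] at hrb'
      have h4 : ((p.2:ℝ) - p'.2) * r * b < 1 * r := by nlinarith
      have h5 : ((p.2:ℝ) - p'.2) * b * r < 1 * r := by linarith
      exact (lt_of_mul_lt_mul_right h5 hr.le).le)
    rw [← hinj] at h2
    exact_mod_cast h2.trans hD
  have h2 := int_card_le (T'.image Prod.fst)
    (δ := Metric.diam (PP c b u v d (List.ofFn x.1) (List.ofFn x.2)) * (1 / r))
    (mul_nonneg Metric.diam_nonneg (by positivity)) (by
      intro y hy y' hy'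
      rw [Finset.mem_image] at hy hy'
      obtain ⟨p, hp, rfl⟩ := hy
      obtain ⟨p', hp', rfl⟩ := hy'
      have := Metric.dist_le_diam_of_mem
        (PP_bdd (c := c) (b := b) (u := u) (v := v) (d := d) (List.ofFn x.1) (List.ofFn x.2))
        (mem_image_of_mem Prod.fst (hmem p hp)) (mem_image_of_mem Prod.fst (hmem p' hp'))
      rw [Real.dist_eq, ← sub_mul] at this
      rw [mul_one_div, le_div_iff₀ hr]
      exact (le_abs_self _).trans this)
  calc (T'.card : ℝ) ≤ D * (T'.image Prod.fst).card := by exact_mod_cast h1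
    _ ≤ _ := by gcongr

end Fin

end

section
variable {N : ℕ} {c b : ℝ} {u v d : Fin N → ℝ}

open Classical in
lemma meet_count (hb0 : 0 < b) (hbc : b < c) (hb1 : b < 1) (n : ℕ) {r : ℝ} (hr : 0 < r)
    (hrb : r ≤ b ^ n) (hrb' : b ^ (n + 1) < r)
    {M : ℕ} (hM : (∑ i, |d i|) / (c - b) + 1 / b + 1 ≤ M) (p : ℤ × ℤ) :
    ((Finset.univ.filter (fun w : Fin n → Fin N =>
      (Sword c b u v d (List.ofFn w) '' unitSq ∩ (Set.Ico ((p.1 : ℝ) * r) ((p.1 + 1 : ℝ) * r) ×ˢ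
        Set.Ico ((p.2 : ℝ) * r) ((p.2 + 1 : ℝ) * r))).Nonempty)).card : ℝ) ≤
    ∑ f ∈ (Finset.Icc (0:ℤ) 1 ×ˢ Finset.Icc (-(M:ℤ)) M), ((HH c b u v d n r (p + f)).card : ℝ) := by
  rw [← Nat.cast_sum, Nat.cast_le]
  refine le_trans (Finset.card_le_card ?_) (Finset.card_biUnion_le (t := fun f => HH c b u v d n r (p + f)))
  intro w hw
  simp only [Finset.mem_filter, Finset.mem_univ, true_and] at hw
  obtain ⟨f, hf, h⟩ := strip_lattice (w := List.ofFn w) hb0 hbc hb1 hr (by simpa using hrb)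
    (by simpa using hrb') hM p hw
  rw [Finset.mem_biUnion]
  refine ⟨f, hf, ?_⟩
  simp only [HH, Finset.mem_filter, Finset.mem_univ, true_and]
  exact h

lemma mesh_fin (hN : 2 ≤ N) (hb0 : 0 < b) (hbc : b < c) (hb1 : b < 1) (hc1 : c < 1)
    (hmaps : ∀ i, Smap c b u v d i '' unitSq ⊆ unitSq)
    {Pi : (ℕ → Fin N) → ℝ × ℝ}
    (hPi : ∀ i, Tendsto (fun n => Sword c b u v d (prefixWord i n) 0) atTop (nhds (Pi i)))
    {μ : Measure (ℕ → Fin N)} (hμ : IsUniformBernoulli N μ) {C θ : ℝ} (hC : 0 < C)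
    (hθ0 : 0 < θ) (hθ1 : θ ≤ 1)
    (hF : ∀ s t : ℝ, s ≤ t → ((μ.map Pi).map Prod.fst) (Icc s t) ≤ ENNReal.ofReal (C * (t - s) ^ θ))
    {M D : ℕ} (hM : (∑ i, |d i|) / (c - b) + 1 / b + 1 ≤ M) (hD : 1 / b + 1 ≤ D)
    (n : ℕ) {r : ℝ} (hr : 0 < r) (hrb : r ≤ b ^ n) (hrb' : b ^ (n + 1) < r) (T : Finset (ℤ × ℤ)) :
    ∑ p ∈ T, ((μ.map Pi) (Set.Ico ((p.1 : ℝ) * r) ((p.1 + 1 : ℝ) * r) ×ˢ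
        Set.Ico ((p.2 : ℝ) * r) ((p.2 + 1 : ℝ) * r))).toReal ^ 2 ≤
    ((Finset.Icc (0:ℤ) 1 ×ˢ Finset.Icc (-(M:ℤ)) M).card : ℝ) ^ 2 * D *
      (WW c b u v d n (1 / r) * (3 * C * (r / c ^ n) ^ θ / (N:ℝ) ^ n) ^ 2) := by
  classical
  have hc := hb0.trans hbc
  set κ := (3 * C * (r / c ^ n) ^ θ / (N:ℝ) ^ n) with hκ
  have hκ0 : 0 ≤ κ := by positivity
  set F := (Finset.Icc (0:ℤ) 1 ×ˢ Finset.Icc (-(M:ℤ)) M) with hFF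
  have h1 : ∀ p : ℤ × ℤ, ((μ.map Pi) (Set.Ico ((p.1 : ℝ) * r) ((p.1 + 1 : ℝ) * r) ×ˢ
        Set.Ico ((p.2 : ℝ) * r) ((p.2 + 1 : ℝ) * r))).toReal ^ 2 ≤
      (F.card : ℝ) * (∑ f ∈ F, ((HH c b u v d n r (p + f)).card : ℝ) ^ 2) * κ ^ 2 := by
    intro p
    have h2 := cell_le hN hc hc1 hmaps hPi hμ hC hθ0 hθ1 hF n hr p
    have h3 := meet_count (u := u) (v := v) hb0 hbc hb1 n hr hrb hrb' hM p
    have h4 := h2.trans (mul_le_mul_of_nonneg_right h3 hκ0)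
    calc _ ≤ ((∑ f ∈ F, ((HH c b u v d n r (p + f)).card : ℝ)) * κ) ^ 2 :=
          pow_le_pow_left₀ ENNReal.toReal_nonneg h4 2
      _ = (∑ f ∈ F, ((HH c b u v d n r (p + f)).card : ℝ)) ^ 2 * κ ^ 2 := by ring
      _ ≤ _ := by
        gcongr
        exact sq_sum_le_card_mul_sum_sq
  have h5 : ∀ f ∈ F, ∑ p ∈ T, ((HH c b u v d n r (p + f)).card : ℝ) ^ 2 ≤
      D * WW c b u v d n (1 / r) := by
    intro f _
    have := lattice_count (u := u) (v := v) (d := d) hc hb0 n hr hrb' hD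
      (T.map (addRightEmbedding f))
    rw [Finset.sum_map] at this
    simpa using this
  calc _ ≤ ∑ p ∈ T, (F.card : ℝ) * (∑ f ∈ F, ((HH c b u v d n r (p + f)).card : ℝ) ^ 2) * κ ^ 2 :=
        Finset.sum_le_sum fun p _ => h1 p
    _ = (F.card : ℝ) * (∑ f ∈ F, ∑ p ∈ T, ((HH c b u v d n r (p + f)).card : ℝ) ^ 2) * κ ^ 2 := by
        rw [← Finset.sum_mul, ← Finset.mul_sum, Finset.sum_comm]
    _ ≤ (F.card : ℝ) * (∑ f ∈ F, D * WW c b u v d n (1 / r)) * κ ^ 2 := by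
        gcongr with f hf
        exact h5 f hf
    _ = _ := by
        rw [Finset.sum_const, nsmul_eq_mul]; ring

lemma mesh_le_of {m : Measure (ℝ × ℝ)} [IsProbabilityMeasure m] {r B : ℝ} 
    (h : ∀ T : Finset (ℤ × ℤ), ∑ p ∈ T, (m (Set.Ico ((p.1 : ℝ) * r) ((p.1 + 1 : ℝ) * r) ×ˢ
        Set.Ico ((p.2 : ℝ) * r) ((p.2 + 1 : ℝ) * r))).toReal ^ 2 ≤ B) :
    meshSum m r ≤ ENNReal.ofReal B := by
  unfold meshSum
  rw [ENNReal.tsum_eq_iSup_sum]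
  refine iSup_le fun T => ?_
  refine le_trans (le_of_eq ?_) (ENNReal.ofReal_le_ofReal (h T))
  rw [ENNReal.ofReal_sum_of_nonneg (fun p _ => by positivity)]
  refine Finset.sum_congr rfl fun p _ => ?_
  rw [ENNReal.ofReal_pow ENNReal.toReal_nonneg, ENNReal.ofReal_toReal (measure_ne_top _ _)]

/-- the numerical estimate -/
lemma WW_num (hN : 2 ≤ N) (hb0 : 0 < b) (hbc : b < c) (hb1 : b < 1)
    {c₃ θ θ' K : ℝ} (hc₃ : 1 ≤ c₃) (htr : Tr c b u v d c₃) (hK : 1 ≤ K)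
    (hMD : ∀ m, ((MeetD c b u v d m).card : ℝ) ≤ K * (((N:ℝ) * c ^ θ') ^ 2) ^ m)
    (hθ'0 : 0 < θ') (hθ : θ' < θ)
    {C : ℝ} (hC : 0 < C) (n : ℕ) {r : ℝ} (hr : 0 < r) (hrb : r ≤ b ^ n) (hrb' : b ^ (n + 1) < r) :
    WW c b u v d n (1 / r) * (3 * C * (r / c ^ n) ^ θ / (N:ℝ) ^ n) ^ 2 ≤
      (9 * C ^ 2 * K * (c₃ / b + 1)) *
      ((n + 1) * (max (b ^ (2 * θ')) (b ^ (2 * θ') * (c ^ (1 - 2 * θ') / (N * b)))) ^ n) := by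
  have hc := hb0.trans hbc
  have hNpos : (0:ℝ) < N := by exact_mod_cast (by omega : 0 < N)
  set X := c ^ (1 - 2 * θ') / (N * b) with hX
  have hX0 : 0 < X := by positivity
  set Y := max (b ^ (2 * θ')) (b ^ (2 * θ') * X) with hY
  have hbn : 0 < b ^ n := by positivity
  have hcn : 0 < c ^ n := by positivity
  -- Frostman factor
  have hκ : (3 * C * (r / c ^ n) ^ θ / (N:ℝ) ^ n) ^ 2 ≤
      9 * C ^ 2 * (b ^ (2 * θ')) ^ n / ((((N:ℝ) * c ^ θ') ^ 2) ^ n) := by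
    have hq : r / c ^ n ≤ (b / c) ^ n := by rw [div_pow]; gcongr
    have hq1 : (b / c) ^ n ≤ 1 := pow_le_one₀ (by positivity) ((div_le_one hc).2 hbc.le)
    have h1 : (r / c ^ n) ^ θ ≤ ((b / c) ^ n) ^ θ' :=
      (Real.rpow_le_rpow_of_exponent_ge (by positivity) (hq.trans hq1) hθ.le).trans
        (Real.rpow_le_rpow (by positivity) hq hθ'0.le)
    have h2 : ((b / c) ^ n) ^ θ' = (b ^ θ') ^ n / (c ^ θ') ^ n := by
      rw [← Real.rpow_natCast, ← Real.rpow_mul (by positivity), mul_comm, Real.rpow_mul (by positivity),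
        Real.rpow_natCast, Real.div_rpow hb0.le hc.le, div_pow]
    have h3 : (b ^ (2 * θ')) = (b ^ θ') ^ 2 := by
      rw [mul_comm, Real.rpow_mul hb0.le]; norm_cast
    rw [h2] at h1
    calc _ ≤ (3 * C * ((b ^ θ') ^ n / (c ^ θ') ^ n) / (N:ℝ) ^ n) ^ 2 := by gcongr
      _ = _ := by
        rw [h3]; field_simp; ring
  have hW := WW_le (A' := fun m => K * (((N:ℝ) * c ^ θ') ^ 2) ^ m) hc hb0 hc₃ htr (by simpa using hK) hMD n
    (1 / r) (by positivity)
  set Q := ((N:ℝ) * c ^ θ') ^ 2 with hQ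
  have hQ0 : 0 < Q := by positivity
  have hterm : ∀ k ∈ Finset.range (n + 1), (N:ℝ) ^ k * (K * Q ^ (n - k)) *
      (c₃ * b ^ (n - k) * c ^ k * (1 / r) + 1) ≤ K * (c₃ / b + 1) * (Q ^ n * X ^ k) := by
    intro k hk
    have hkn : k ≤ n := by simpa [Nat.lt_succ_iff] using hk
    obtain ⟨j, rfl⟩ := Nat.exists_eq_add_of_le hkn
    have e1 : k + j - k = j := by omega
    rw [e1]
    have h1 : 1 / r ≤ 1 / b ^ (k + j + 1) := one_div_le_one_div_of_le (by positivity) hrb'.le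
    have h2 : c₃ * b ^ j * c ^ k * (1 / r) + 1 ≤ (c₃ / b + 1) * (c / b) ^ k := by
      have h3 : c₃ * b ^ j * c ^ k * (1 / r) ≤ c₃ / b * (c / b) ^ k := by
        calc _ ≤ c₃ * b ^ j * c ^ k * (1 / b ^ (k + j + 1)) := by gcongr
          _ = _ := by
            rw [div_pow, pow_succ, pow_add]; field_simp
      have h4 : 1 ≤ (c / b) ^ k := one_le_pow₀ ((one_le_div hb0).2 hbc.le)
      linarith
    have hXQ : X * Q = N * (c / b) := by
      rw [hX, hQ, mul_pow]
      have : (c ^ θ') ^ 2 * c ^ (1 - 2 * θ') = c := by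
        rw [← Real.rpow_natCast, ← Real.rpow_mul hc.le, ← Real.rpow_add hc]
        convert Real.rpow_one c using 2
        push_cast; ring
      field_simp
      linear_combination this
    calc _ ≤ (N:ℝ) ^ k * (K * Q ^ j) * ((c₃ / b + 1) * (c / b) ^ k) := by gcongr
      _ = K * (c₃ / b + 1) * (Q ^ j * (N * (c / b)) ^ k) := by rw [mul_pow]; ring
      _ = _ := by rw [← hXQ, mul_pow, pow_add]; ring
  have hW2 := hW.trans (Finset.sum_le_sum hterm)
  rw [← Finset.mul_sum, ← Finset.mul_sum] at hW2
  have hbX : ∀ k ∈ Finset.range (n + 1), (b ^ (2 * θ')) ^ n * X ^ k ≤ Y ^ n := by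
    intro k hk
    have hkn : k ≤ n := by simpa [Nat.lt_succ_iff] using hk
    obtain ⟨j, rfl⟩ := Nat.exists_eq_add_of_le hkn
    have hb' : 0 ≤ b ^ (2 * θ') := by positivity
    calc _ = (b ^ (2 * θ') * X) ^ k * (b ^ (2 * θ')) ^ j := by rw [mul_pow, pow_add]; ring
      _ ≤ Y ^ k * Y ^ j := by
        gcongr
        · exact le_max_right _ _
        · exact le_max_left _ _
      _ = _ := by rw [pow_add]
  have hs : (b ^ (2 * θ')) ^ n * ∑ k ∈ Finset.range (n + 1), X ^ k ≤ (n + 1) * Y ^ n := by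
    rw [Finset.mul_sum]
    refine (Finset.sum_le_sum hbX).trans ?_
    simp
  calc _ ≤ (K * (c₃ / b + 1) * (Q ^ n * ∑ k ∈ Finset.range (n + 1), X ^ k)) *
        (9 * C ^ 2 * (b ^ (2 * θ')) ^ n / (Q ^ n)) := by
        refine mul_le_mul hW2 hκ (by positivity) (by positivity)
    _ = (9 * C ^ 2 * K * (c₃ / b + 1)) * ((b ^ (2 * θ')) ^ n * ∑ k ∈ Finset.range (n + 1), X ^ k) := by
        field_simp
    _ ≤ _ := by gcongr

end
section

lemma choose_theta {N : ℕ} {b c a : ℝ} (hN : 2 ≤ N) (hb0 : 0 < b) (hb1 : b < 1) (hc : 0 < c)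
    (ha : a < min 2 (1 + Real.log ((N : ℝ) * c) / (-Real.log b))) :
    ∃ θ' : ℝ, 0 < θ' ∧ θ' < 1 ∧
      max (b ^ (2 * θ')) (b ^ (2 * θ') * (c ^ (1 - 2 * θ') / (N * b))) < b ^ a := by
  have hNpos : (0:ℝ) < N := by exact_mod_cast (by omega : 0 < N)
  have hlb : Real.log b < 0 := Real.log_neg hb0 hb1
  have hcont : Continuous (fun θ' : ℝ => max (b ^ (2 * θ')) (b ^ (2 * θ') * (c ^ (1 - 2 * θ') / (N * b)))) := by
    have h1 : Continuous (fun θ' : ℝ => b ^ (2 * θ')) :=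
      (Real.continuous_const_rpow hb0.ne').comp (by fun_prop)
    have h2 : Continuous (fun θ' : ℝ => c ^ (1 - 2 * θ')) :=
      (Real.continuous_const_rpow hc.ne').comp (by fun_prop)
    exact h1.max (h1.mul (h2.div_const _))
  have h1 : max (b ^ (2 * (1:ℝ))) (b ^ (2 * (1:ℝ)) * (c ^ (1 - 2 * (1:ℝ)) / (N * b))) < b ^ a := by
    refine max_lt ?_ ?_
    · exact Real.rpow_lt_rpow_of_exponent_gt hb0 hb1 (by linarith [min_le_left (2:ℝ) (1 + Real.log ((N : ℝ) * c) / (-Real.log b))])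
    · have e : b ^ (2 * (1:ℝ)) * (c ^ (1 - 2 * (1:ℝ)) / (N * b)) =
          b ^ (1 + Real.log ((N : ℝ) * c) / (-Real.log b)) := by
        have e1 : (1 - 2 * (1:ℝ)) = -1 := by norm_num
        have e2 : (2 * (1:ℝ)) = (2:ℕ) := by norm_num
        rw [e1, e2, Real.rpow_natCast, Real.rpow_neg_one, Real.rpow_add hb0, Real.rpow_one]
        have e3 : b ^ (Real.log ((N : ℝ) * c) / (-Real.log b)) = (N * c)⁻¹ := by
          rw [Real.rpow_def_of_pos hb0]
          have : Real.log b * (Real.log ((N : ℝ) * c) / (-Real.log b)) = - Real.log (N * c) := by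
            field_simp [hlb.ne]
          rw [this, Real.exp_neg, Real.exp_log (by positivity)]
        rw [e3]
        field_simp
      rw [e]
      exact Real.rpow_lt_rpow_of_exponent_gt hb0 hb1 (ha.trans_le (min_le_right _ _))
  have h2 := (hcont.tendsto 1).eventually_lt_const h1
  have h3 : ∀ᶠ x : ℝ in 𝓝 1, 0 < x := eventually_gt_nhds (by norm_num)
  have h4 : ∀ᶠ x : ℝ in 𝓝[<] 1, x < 1 := eventually_mem_nhdsWithin
  obtain ⟨x, hx1, hx2, hx3⟩ := (((h2.and h3).filter_mono nhdsWithin_le_nhds).and h4).exists.imp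
    (fun x h => (⟨h.1.1, h.1.2, h.2⟩ : _ ∧ _ ∧ _))
  exact ⟨x, hx2, hx3, hx1⟩

lemma poly_exp {Y Z C : ℝ} (hY : 0 ≤ Y) (hYZ : Y < Z) :
    ∀ᶠ n : ℕ in atTop, C * ((n + 1) * Y ^ n) ≤ Z ^ (n + 1) := by
  have hZ : 0 < Z := hY.trans_lt hYZ
  have hq : Y / Z < 1 := (div_lt_one hZ).2 hYZ
  have hq0 : 0 ≤ Y / Z := by positivity
  have h1 := (tendsto_self_mul_const_pow_of_lt_one hq0 hq).add (tendsto_pow_atTop_nhds_zero_of_lt_one hq0 hq)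
  have h2 := h1.const_mul C
  simp only [add_zero, mul_zero] at h2
  filter_upwards [h2.eventually_le_const hZ] with n hn
  have : C * ((n + 1) * Y ^ n) = C * (n * (Y / Z) ^ n + (Y / Z) ^ n) * Z ^ n := by
    rw [div_pow]; field_simp
  rw [this, pow_succ, mul_comm (Z ^ n)]
  gcongr

lemma mesh_lower {m : Measure (ℝ × ℝ)} [IsProbabilityMeasure m] (hm : m unitSqᶜ = 0) {r : ℝ}
    (hr : 0 < r) (hr4 : r ≤ 1 / 4) (hfin : meshSum m r ≠ ⊤) : r ^ 3 ≤ (meshSum m r).toReal := by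
  set L := ⌊1 / r⌋₊ with hL
  set T := (Finset.Icc (0:ℤ) L ×ˢ Finset.Icc (0:ℤ) L) with hT
  set f : ℤ × ℤ → ℝ≥0∞ := fun p => m (Set.Ico ((p.1 : ℝ) * r) ((p.1 + 1 : ℝ) * r) ×ˢ
        Set.Ico ((p.2 : ℝ) * r) ((p.2 + 1 : ℝ) * r)) with hf
  have hft : ∀ p, f p ≠ ⊤ := fun p => measure_ne_top _ _
  have key : ∀ x ∈ Icc (0:ℝ) 1, ⌊x / r⌋ ∈ Finset.Icc (0:ℤ) L ∧
      x ∈ Set.Ico ((⌊x / r⌋ : ℝ) * r) ((⌊x / r⌋ + 1 : ℝ) * r) := by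
    intro x hx
    refine ⟨?_, ?_, ?_⟩
    · rw [Finset.mem_Icc]
      refine ⟨Int.floor_nonneg.2 (div_nonneg hx.1 hr.le), ?_⟩
      rw [hL, Int.natCast_floor_eq_floor (by positivity)]
      exact Int.floor_le_floor (by have := hx.2; gcongr)
    · rw [← le_div_iff₀ hr]; exact Int.floor_le _
    · rw [← div_lt_iff₀ hr]; exact Int.lt_floor_add_one _
  have hcov : (1 : ℝ≥0∞) ≤ ∑ p ∈ T, f p := by
    have h1 : m unitSq = 1 := by
      have hms : MeasurableSet unitSq := measurableSet_Icc.prod measurableSet_Icc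
      exact (prob_compl_eq_zero_iff hms).1 hm
    rw [← h1]
    refine le_trans (measure_mono ?_) (measure_biUnion_finset_le T _)
    rintro ⟨x, y⟩ ⟨hx, hy⟩
    rw [mem_iUnion₂]
    exact ⟨(⌊x / r⌋, ⌊y / r⌋), Finset.mem_product.2 ⟨(key x hx).1, (key y hy).1⟩,
      (key x hx).2, (key y hy).2⟩
  have hcov' : (1:ℝ) ≤ ∑ p ∈ T, (f p).toReal := by
    rw [← ENNReal.toReal_sum (fun p _ => hft p)]
    have := ENNReal.toReal_mono (ENNReal.sum_ne_top.2 fun p _ => hft p) hcov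
    simpa using this
  have hs : ∑ p ∈ T, (f p).toReal ^ 2 ≤ (meshSum m r).toReal := by
    have := ENNReal.toReal_mono hfin (ENNReal.sum_le_tsum (f := fun p => f p ^ 2) T)
    rw [ENNReal.toReal_sum (fun p _ => ENNReal.pow_ne_top (hft p))] at this
    simpa [ENNReal.toReal_pow] using this
  have hcs := sq_sum_le_card_mul_sum_sq (s := T) (f := fun p => (f p).toReal)
  have hcard : (T.card : ℝ) ≤ 4 / r ^ 2 := by
    have e : (T.card : ℝ) = ((L:ℝ) + 1) ^ 2 := by
      rw [hT, Finset.card_product, Int.card_Icc]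
      have : ((L:ℤ) + 1 - 0).toNat = L + 1 := by omega
      rw [this]; push_cast; ring
    have hLr : (L:ℝ) ≤ 1 / r := Nat.floor_le (by positivity)
    have h1r : 1 ≤ 1 / r := by rw [le_div_iff₀ hr]; linarith
    rw [e]
    calc ((L:ℝ) + 1) ^ 2 ≤ (1 / r + 1 / r) ^ 2 := by gcongr
      _ = _ := by field_simp; norm_num
  have h0 : 0 ≤ ∑ p ∈ T, (f p).toReal ^ 2 := Finset.sum_nonneg fun _ _ => by positivity
  have h1 : 1 ≤ 4 / r ^ 2 * ∑ p ∈ T, (f p).toReal ^ 2 := by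
    calc (1:ℝ) ≤ (∑ p ∈ T, (f p).toReal) ^ 2 := by nlinarith
      _ ≤ _ := hcs
      _ ≤ _ := by gcongr
  have h2 : r ^ 2 ≤ 4 * ∑ p ∈ T, (f p).toReal ^ 2 := by
    rw [div_mul_eq_mul_div, le_div_iff₀ (by positivity)] at h1
    linarith
  have h3 : 0 < r ^ 2 := by positivity
  nlinarith

end

/-- under Assumption B, the correlation (`L²`) dimension of `ν` is at least
`min(2, 1 + log(Nc)/(-log b))`. -/
theorem statement12 (N : ℕ) (hN : 2 ≤ N) (b c : ℝ)
    (hb0 : 0 < b) (hb1 : b < 1) (hc0 : 0 < c) (hc1 : c < 1)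
    (u v d : Fin N → ℝ)
    (hmaps : ∀ i, Smap c b u v d i '' unitSq ⊆ unitSq)
    (Pi : (ℕ → Fin N) → ℝ × ℝ)
    (hPi : ∀ i, Tendsto (fun n => Sword c b u v d (prefixWord i n) 0) atTop (nhds (Pi i)))
    (μ : Measure (ℕ → Fin N)) (hμ : IsUniformBernoulli N μ)
    (ν : Measure (ℝ × ℝ)) (hν : ν = μ.map Pi)
    (νx : Measure ℝ) (hνx : νx = ν.map Prod.fst)
    (hB1 : 1 / (N : ℝ) < c) (hB2 : b < c)
    (hB3 : ∀ q > (1 : ℝ), HasLqDensity νx q)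
    (hB4 : Transversality N c b u v d) :
    min 2 (1 + Real.log ((N : ℝ) * c) / (-Real.log b)) ≤
      liminf (fun r : ℝ => Real.log (meshSum ν r).toReal / Real.log r) (nhdsWithin 0 (Set.Ioi 0)) := by
  subst hν
  subst hνx
  have hprob : IsProbabilityMeasure μ := hμ.1
  have hm := pi_meas hPi
  have hprob' : IsProbabilityMeasure (μ.map Pi) := Measure.isProbabilityMeasure_map hm.aemeasurable
  have hNpos : (0:ℝ) < N := by exact_mod_cast (by omega : 0 < N)
  have hlb : Real.log b < 0 := Real.log_neg hb0 hb1
  have hsupp : (μ.map Pi) unitSqᶜ = 0 := by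
    have hms : MeasurableSet unitSq := measurableSet_Icc.prod measurableSet_Icc
    rw [Measure.map_apply hm hms.compl]
    have : Pi ⁻¹' unitSqᶜ = ∅ := by
      ext i
      have h := pi_mem hmaps hPi i 0
      simp only [prefixWord, List.ofFn_zero, Sword, image_id] at h
      simp [h]
    rw [this, measure_empty]
  set s := min 2 (1 + Real.log ((N : ℝ) * c) / (-Real.log b)) with hs
  have hs1 : 1 < s := by
    have h1 : 1 < (N:ℝ) * c := by
      rw [div_lt_iff₀ hNpos] at hB1; linarith
    have h2 : 0 < Real.log ((N : ℝ) * c) / (-Real.log b) :=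
      div_pos (Real.log_pos h1) (by linarith)
    exact lt_min (by norm_num) (by linarith)
  have upper : ∀ a, 1 < a → a < s → ∀ᶠ r : ℝ in 𝓝[>] 0, meshSum (μ.map Pi) r ≤ ENNReal.ofReal (r ^ a) := by
    intro a ha1 has
    obtain ⟨θ', hθ'0, hθ'1, hY⟩ := choose_theta hN hb0 hb1 hc0 has
    obtain ⟨θ, hθ'θ, hθ1⟩ := exists_between hθ'1
    have hθ0 := hθ'0.trans hθ'θ
    have h1θ : 0 < 1 - θ := by linarith
    have hq : 1 < 1 / (1 - θ) := by rw [lt_div_iff₀ h1θ]; linarith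
    obtain ⟨C, hC, hF⟩ := frostman hq (hB3 _ hq)
    have e : 1 - 1 / (1 / (1 - θ)) = θ := by rw [one_div_one_div]; ring
    rw [e] at hF
    obtain ⟨c₃, hc₃, htr⟩ := tr_of hb0 hB4
    obtain ⟨K, hK, hMD⟩ := MeetD_growth hN hb0 hB2 hc1 hmaps hC hθ0 hθ1.le hθ'θ hc₃
      (fun h s t hst => cnt_le hN hc0 hmaps hPi hμ hC hF h hst) htr
    obtain ⟨M, hM⟩ := exists_nat_ge ((∑ i, |d i|) / (c - b) + 1 / b + 1)
    obtain ⟨D, hD⟩ := exists_nat_ge (1 / b + 1)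
    set Y := max (b ^ (2 * θ')) (b ^ (2 * θ') * (c ^ (1 - 2 * θ') / (N * b))) with hYdef
    have hY0 : 0 ≤ Y := le_max_of_le_left (by positivity)
    set C₂ := ((Finset.Icc (0:ℤ) 1 ×ˢ Finset.Icc (-(M:ℤ)) M).card : ℝ) ^ 2 * D *
      (9 * C ^ 2 * K * (c₃ / b + 1)) with hC₂
    obtain ⟨n₀, hn₀⟩ := eventually_atTop.1 (poly_exp (C := C₂) hY0 hY)
    have hev : ∀ᶠ r : ℝ in 𝓝[>] 0, r < b ^ (n₀ + 1) :=
      (eventually_lt_nhds (by positivity)).filter_mono nhdsWithin_le_nhds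
    filter_upwards [hev, self_mem_nhdsWithin] with r hr1 hr0
    have hr0' : (0:ℝ) < r := hr0
    obtain ⟨n, hn1, hn2⟩ := exists_nat_pow_near_of_lt_one hr0'
      (hr1.le.trans (pow_le_one₀ hb0.le hb1.le)) hb0 hb1
    have hnn : n₀ ≤ n := by
      have := (pow_lt_pow_iff_right_of_lt_one₀ hb0 hb1).1 (hn1.trans hr1)
      omega
    refine mesh_le_of fun T => ?_
    refine (mesh_fin hN hb0 hB2 hb1 hc1 hmaps hPi hμ hC hθ0 hθ1.le hF hM hD n hr0' hn2 hn1 T).trans ?_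
    have h1 := WW_num hN hb0 hB2 hb1 hc₃ htr hK hMD hθ'0 hθ'θ hC n hr0' hn2 hn1
    refine (mul_le_mul_of_nonneg_left h1 (by positivity)).trans ?_
    rw [← mul_assoc]
    refine (hn₀ n hnn).trans ?_
    rw [← Real.rpow_natCast, ← Real.rpow_mul hb0.le, mul_comm a, Real.rpow_mul hb0.le, Real.rpow_natCast]
    exact Real.rpow_le_rpow (by positivity) hn1.le (by linarith)
  have hr4 : ∀ᶠ r : ℝ in 𝓝[>] 0, r < 1 / 4 :=
    (eventually_lt_nhds (by norm_num)).filter_mono nhdsWithin_le_nhds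
  have bds : ∀ a, 1 < a → a < s → ∀ᶠ r : ℝ in 𝓝[>] 0,
      a ≤ Real.log (meshSum (μ.map Pi) r).toReal / Real.log r ∧
      Real.log (meshSum (μ.map Pi) r).toReal / Real.log r ≤ 3 := by
    intro a ha1 has
    filter_upwards [upper a ha1 has, hr4, self_mem_nhdsWithin] with r hr1 hr2 hr0
    have hr0' : (0:ℝ) < r := hr0
    have hlr : Real.log r < 0 := Real.log_neg hr0' (by linarith)
    have hlow := mesh_lower hsupp hr0' hr2.le (ne_top_of_le_ne_top ENNReal.ofReal_ne_top hr1)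
    have hup := ENNReal.toReal_le_of_le_ofReal (by positivity) hr1
    have hpos : 0 < (meshSum (μ.map Pi) r).toReal := lt_of_lt_of_le (by positivity) hlow
    constructor
    · rw [le_div_iff_of_neg hlr, ← Real.log_rpow hr0']
      exact Real.log_le_log hpos hup
    · rw [div_le_iff_of_neg hlr]
      have := Real.log_le_log (by positivity) hlow
      rw [Real.log_pow] at this
      exact_mod_cast this
  obtain ⟨a₀, ha₀, ha₀s⟩ := exists_between hs1
  have hcob : IsCoboundedUnder (· ≥ ·) (𝓝[>] (0:ℝ))
      (fun r : ℝ => Real.log (meshSum (μ.map Pi) r).toReal / Real.log r) := by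
    refine IsBoundedUnder.isCoboundedUnder_ge ⟨3, ?_⟩
    rw [eventually_map]
    exact (bds a₀ ha₀ ha₀s).mono fun r h => h.2
  by_contra hcon
  rw [not_le] at hcon
  obtain ⟨a, ha, has⟩ := exists_between (max_lt hcon hs1)
  have := le_liminf_of_le hcob ((bds a ((le_max_right _ _).trans_lt ha) has).mono fun r h => h.1)
  exact absurd ((le_max_left _ _).trans_lt ha) (not_lt.2 this)

end
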